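/- Dimensionally sharp subadditivity: let ρ_AB be a bipartite density operator with marginals ρ_A, ρ_B, and set D_A = (d_A−1)/d_A, D_B = (d_B−1)/d_B. If S_L(ρ_A) ≤ D_A·( S_L(ρ_B)/D_B − 1 + 2√(1 − S_L(ρ_B)/D_B) ), then S_L(ρ_AB) ≤ S_L(ρ_A) + S_L(ρ_B) − 2·D_A·D_B·(1 − √(1 − S_L(ρ_A)/D_A))·(1 − √(1 − S_L(ρ_B)/D_B)). -/

import Mathlib

open Matrix
open scoped ComplexOrder

noncomputable def linEntropy {n : Type*} [Fintype n] (ρ : Matrix n n ℂ) : ℝ :=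
  1 - ((ρ * ρ).trace).re

noncomputable def ptraceB {dA dB : ℕ} (ρ : Matrix (Fin dA × Fin dB) (Fin dA × Fin dB) ℂ) :
    Matrix (Fin dA) (Fin dA) ℂ := fun i j => ∑ k, ρ (i, k) (j, k)

noncomputable def ptraceA {dA dB : ℕ} (ρ : Matrix (Fin dA × Fin dB) (Fin dA × Fin dB) ℂ) :
    Matrix (Fin dB) (Fin dB) ℂ := fun i j => ∑ k, ρ (k, i) (k, j)

/-!
Subtracting from `ρ` its marginals, suitably extended by the identity, leaves the correlation part
`Z` of the Bloch decomposition, and with `r_A = √(1 - S_L(ρ_A)/D_A)`, `r_B = √(1 - S_L(ρ_B)/D_B)`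
Pythagoras gives `S_L(ρ) = S_L(ρ_A) + S_L(ρ_B) - D_A D_B (1 - r_A² - r_B²) - ‖Z‖²`. So the claim
is `D_A D_B (r_A + r_B - 1)² ≤ ‖Z‖²`, while the hypothesis says precisely `1 ≤ r_A + r_B`.

The traceless part `X` of `ρ_A` has `‖X‖² = D_A r_A²`, and as its eigenvalues sum to zero, none
exceeds `D_A r_A`; likewise for the traceless part `Y` of `ρ_B`. Hence
`(D_A r_A - X) ⊗ (D_B r_B - Y)` is positive, and testing `ρ` against it yields
`D_A D_B r_A r_B (r_A + r_B - 1) ≤ tr (ρ (X ⊗ Y)) = ⟪Z, X ⊗ Y⟫`. Cauchy–Schwarz, with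
`‖X ⊗ Y‖² = D_A D_B r_A² r_B²`, then bounds `‖Z‖` from below.
-/

open scoped Kronecker

section Spectral

variable {𝕜 n : Type*} [RCLike 𝕜] [Fintype n] {M N : Matrix n n 𝕜}

lemma card_mul_sq_le_of_sum_eq_zero {R : Type*} [CommRing R] [LinearOrder R]
    [IsStrictOrderedRing R] {f : n → R} (hf : ∑ i, f i = 0) (i : n) :
    Fintype.card n * f i ^ 2 ≤ (Fintype.card n - 1) * ∑ j, f j ^ 2 := by
  classical
  have hsum : ∑ j ∈ Finset.univ.erase i, f j = -f i := by
    rw [Finset.sum_erase_eq_sub (Finset.mem_univ i), hf, zero_sub]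
  have hsq : ∑ j ∈ Finset.univ.erase i, f j ^ 2 = ∑ j, f j ^ 2 - f i ^ 2 :=
    Finset.sum_erase_eq_sub (Finset.mem_univ i)
  have hcard : ((Finset.univ.erase i).card : R) = Fintype.card n - 1 := by
    rw [Finset.cast_card_erase_of_mem (Finset.mem_univ i), Finset.card_univ]
  have hcauchy := sq_sum_le_card_mul_sum_sq (s := Finset.univ.erase i) (f := f)
  rw [hsum, hsq, hcard] at hcauchy
  linarith

lemma sq_re_trace_mul_le (hM : M.IsHermitian) (hN : N.IsHermitian) :
    RCLike.re (M * N).trace ^ 2 ≤ RCLike.re (M * M).trace * RCLike.re (N * N).trace := by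
  classical
  let := toMatrixSeminormedAddCommGroup (1 : Matrix n n 𝕜) .one
  let := toMatrixInnerProductSpace (1 : Matrix n n 𝕜) .one
  have inner_eq (P Q : Matrix n n 𝕜) : inner 𝕜 P Q = (Q * 1 * Pᴴ).trace := rfl
  have hcauchy := inner_mul_inner_self_le (𝕜 := 𝕜) M N
  simp only [inner_eq, mul_one, hM.eq, hN.eq, trace_mul_comm N M] at hcauchy
  calc RCLike.re (M * N).trace ^ 2 ≤ ‖(M * N).trace‖ ^ 2 :=
        sq_le_sq' (neg_le_of_abs_le (RCLike.abs_re_le_norm _)) (RCLike.re_le_norm _)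
    _ ≤ RCLike.re (M * M).trace * RCLike.re (N * N).trace := by rwa [sq]

lemma trace_mul_self_eq_sum_eigenvalues_sq [DecidableEq n] (hM : M.IsHermitian) :
    (M * M).trace = ((∑ i, hM.eigenvalues i ^ 2 : ℝ) : 𝕜) := by
  conv_lhs => rw [hM.spectral_theorem, ← map_mul, Unitary.conjStarAlgAut_apply, trace_mul_cycle]
  simp [sq]

lemma re_trace_mul_self_nonneg (hM : M.IsHermitian) : 0 ≤ RCLike.re (M * M).trace := by
  classical
  rw [trace_mul_self_eq_sum_eigenvalues_sq hM, RCLike.ofReal_re]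
  positivity

variable [DecidableEq n]

lemma sum_eigenvalues_eq_of_trace_eq (hM : M.IsHermitian) {r : ℝ} (h : M.trace = r) :
    ∑ i, hM.eigenvalues i = r := by
  rw [hM.trace_eq_sum_eigenvalues] at h
  exact_mod_cast h

open scoped MatrixOrder in
lemma posSemidef_smul_one_sub_of_eigenvalues_le (hM : M.IsHermitian) {r : ℝ}
    (h : ∀ i, hM.eigenvalues i ≤ r) : (r • (1 : Matrix n n 𝕜) - M).PosSemidef := by
  rw [← Algebra.algebraMap_eq_smul_one, ← Matrix.le_iff]
  refine le_algebraMap_of_spectrum_le ?_ hM.isSelfAdjoint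
  rw [hM.spectrum_real_eq_range_eigenvalues]
  exact Set.forall_mem_range.2 h

lemma posSemidef_smul_one_sub_of_trace_eq_zero (hM : M.IsHermitian) (htr : M.trace = 0) {r : ℝ}
    (hr : 0 ≤ r) (h : (1 - (Fintype.card n : ℝ)⁻¹) * RCLike.re (M * M).trace ≤ r ^ 2) :
    (r • (1 : Matrix n n 𝕜) - M).PosSemidef := by
  refine posSemidef_smul_one_sub_of_eigenvalues_le hM fun i => le_of_sq_le_sq ?_ hr
  have hcard : (0 : ℝ) < Fintype.card n := by exact_mod_cast Fintype.card_pos_iff.2 ⟨i⟩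
  have hsum := sum_eigenvalues_eq_of_trace_eq hM (r := 0) (by simpa using htr)
  rw [trace_mul_self_eq_sum_eigenvalues_sq hM, RCLike.ofReal_re] at h
  refine (le_of_mul_le_mul_left ?_ hcard).trans h
  convert card_mul_sq_le_of_sum_eq_zero hsum i using 1
  field_simp

end Spectral

section Algebra

variable {l m n p R : Type*}

lemma isSelfAdjoint_trace [AddCommMonoid R] [StarAddMonoid R] [Fintype n] {M : Matrix n n R}
    (hM : M.IsHermitian) : IsSelfAdjoint M.trace := by
  rw [isSelfAdjoint_iff, ← trace_conjTranspose, hM.eq]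

lemma sub_kronecker [NonUnitalNonAssocRing R] (M M' : Matrix l m R) (N : Matrix n p R) :
    (M - M') ⊗ₖ N = M ⊗ₖ N - M' ⊗ₖ N := by
  ext
  simp [sub_mul]

lemma kronecker_sub [NonUnitalNonAssocRing R] (M : Matrix l m R) (N N' : Matrix n p R) :
    M ⊗ₖ (N - N') = M ⊗ₖ N - M ⊗ₖ N' := by
  ext
  simp [mul_sub]

lemma isHermitian_kronecker [CommMagma R] [StarMul R] {M : Matrix m m R} {N : Matrix n n R}
    (hM : M.IsHermitian) (hN : N.IsHermitian) : (M ⊗ₖ N).IsHermitian := by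
  rw [IsHermitian, conjTranspose_kronecker, hM.eq, hN.eq]

end Algebra

section PartialTrace

variable {R m n : Type*}

/-- Partial trace over the second tensor factor, for arbitrary finite index types. -/
def partialTraceRight [Fintype n] [AddCommMonoid R] (ρ : Matrix (m × n) (m × n) R) :
    Matrix m m R :=
  fun i j => ∑ k, ρ (i, k) (j, k)

/-- Partial trace over the first tensor factor, for arbitrary finite index types. -/
def partialTraceLeft [Fintype m] [AddCommMonoid R] (ρ : Matrix (m × n) (m × n) R) :
    Matrix n n R :=
  fun i j => ∑ k, ρ (k, i) (k, j)

lemma isHermitian_partialTraceRight [Fintype n] [AddCommMonoid R] [StarAddMonoid R]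
    {ρ : Matrix (m × n) (m × n) R} (hρ : ρ.IsHermitian) : (partialTraceRight ρ).IsHermitian :=
  IsHermitian.ext fun _ _ => by simp only [partialTraceRight, star_sum, hρ.apply]

lemma isHermitian_partialTraceLeft [Fintype m] [AddCommMonoid R] [StarAddMonoid R]
    {ρ : Matrix (m × n) (m × n) R} (hρ : ρ.IsHermitian) : (partialTraceLeft ρ).IsHermitian :=
  IsHermitian.ext fun _ _ => by simp only [partialTraceLeft, star_sum, hρ.apply]

variable [Fintype m] [Fintype n]

lemma trace_partialTraceRight [AddCommMonoid R] (ρ : Matrix (m × n) (m × n) R) :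
    (partialTraceRight ρ).trace = ρ.trace := by
  simp [trace, partialTraceRight, Fintype.sum_prod_type]

lemma trace_partialTraceLeft [AddCommMonoid R] (ρ : Matrix (m × n) (m × n) R) :
    (partialTraceLeft ρ).trace = ρ.trace := by
  simp [trace, partialTraceLeft, Fintype.sum_prod_type_right]

lemma trace_mul_kronecker_one [NonAssocSemiring R] [DecidableEq n]
    (ρ : Matrix (m × n) (m × n) R) (M : Matrix m m R) :
    (ρ * (M ⊗ₖ (1 : Matrix n n R))).trace = (partialTraceRight ρ * M).trace := by
  simp only [trace, diag, mul_apply, partialTraceRight, Fintype.sum_prod_type,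
    kroneckerMap_apply, one_apply, mul_ite, mul_one, mul_zero, Finset.sum_ite_eq',
    Finset.mem_univ, if_true, Finset.sum_mul]
  exact Finset.sum_congr rfl fun i _ => Finset.sum_comm

lemma trace_mul_one_kronecker [NonAssocSemiring R] [DecidableEq m]
    (ρ : Matrix (m × n) (m × n) R) (M : Matrix n n R) :
    (ρ * ((1 : Matrix m m R) ⊗ₖ M)).trace = (partialTraceLeft ρ * M).trace := by
  simp only [trace, diag, mul_apply, partialTraceLeft, Fintype.sum_prod_type_right,
    kroneckerMap_apply, one_apply, ite_mul, one_mul, zero_mul, mul_ite, mul_zero,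
    Finset.sum_ite_eq', Finset.mem_univ, if_true, Finset.sum_mul]
  exact Finset.sum_congr rfl fun i _ => Finset.sum_comm

lemma trace_mul_smul_one_sub_kronecker_smul_one_sub [CommRing R] {S : Type*} [CommRing S]
    [Algebra S R] [DecidableEq m] [DecidableEq n] (ρ : Matrix (m × n) (m × n) R) (a b : S)
    (M : Matrix m m R) (N : Matrix n n R) :
    (ρ * ((a • 1 - M) ⊗ₖ (b • 1 - N))).trace = (a * b) • ρ.trace -
      b • (partialTraceRight ρ * M).trace - a • (partialTraceLeft ρ * N).trace +
      (ρ * (M ⊗ₖ N)).trace := by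
  rw [← trace_mul_kronecker_one, ← trace_mul_one_kronecker]
  simp only [sub_kronecker, kronecker_sub, smul_kronecker, kronecker_smul, one_kronecker_one,
    mul_sub, mul_smul_comm, mul_one, trace_sub, trace_smul]
  module

end PartialTrace

section TracelessPart

variable {K m n : Type*} [Field K] [Fintype m] [DecidableEq m] [Fintype n] [DecidableEq n]

/-- The component of `M` orthogonal to the identity. For a density matrix this is the deviation
from the maximally mixed state, i.e. the Bloch vector. -/
def tracelessPart (M : Matrix n n K) : Matrix n n K :=
  M - (M.trace / Fintype.card n) • 1

lemma trace_tracelessPart [CharZero K] [Nonempty n] (M : Matrix n n K) :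
    (tracelessPart M).trace = 0 := by
  simp [tracelessPart]

lemma trace_mul_tracelessPart (M : Matrix n n K) :
    (M * tracelessPart M).trace = (M * M).trace - M.trace ^ 2 / Fintype.card n := by
  simp only [tracelessPart, mul_sub, mul_smul_comm, mul_one, trace_sub, trace_smul, smul_eq_mul]
  ring

lemma trace_tracelessPart_mul_self [CharZero K] [Nonempty n] (M : Matrix n n K) :
    (tracelessPart M * tracelessPart M).trace =
      (M * M).trace - M.trace ^ 2 / Fintype.card n := by
  rw [← trace_mul_tracelessPart]
  nth_rw 1 [tracelessPart]
  rw [sub_mul, trace_sub, smul_mul_assoc, one_mul, trace_smul, trace_tracelessPart, smul_zero,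
    sub_zero]

lemma isHermitian_tracelessPart [StarRing K] {M : Matrix n n K} (hM : M.IsHermitian) :
    (tracelessPart M).IsHermitian :=
  hM.sub (isHermitian_one.smul ((isSelfAdjoint_trace hM).div (.natCast _)))

/-- The component of `ρ` orthogonal to all local matrices `M ⊗ 1` and `1 ⊗ N`; its partial traces
vanish. For a density matrix it collects the correlation terms of the Bloch decomposition. -/
def correlationPart (ρ : Matrix (m × n) (m × n) K) : Matrix (m × n) (m × n) K :=
  ρ - (Fintype.card n : K)⁻¹ • (partialTraceRight ρ ⊗ₖ 1)
    - (Fintype.card m : K)⁻¹ • (1 ⊗ₖ partialTraceLeft ρ)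
    + (ρ.trace / (Fintype.card m * Fintype.card n)) • 1

lemma isHermitian_correlationPart [StarRing K] {ρ : Matrix (m × n) (m × n) K}
    (hρ : ρ.IsHermitian) : (correlationPart ρ).IsHermitian :=
  ((hρ.sub ((isHermitian_kronecker (isHermitian_partialTraceRight hρ) isHermitian_one).smul
    (IsSelfAdjoint.natCast _).inv₀)).sub
      ((isHermitian_kronecker isHermitian_one (isHermitian_partialTraceLeft hρ)).smul
        (IsSelfAdjoint.natCast _).inv₀)).add
    (isHermitian_one.smul ((isSelfAdjoint_trace hρ).div
      ((IsSelfAdjoint.natCast _).mul (.natCast _))))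

lemma trace_correlationPart_mul_self [CharZero K] [Nonempty m] [Nonempty n]
    (ρ : Matrix (m × n) (m × n) K) :
    (correlationPart ρ * correlationPart ρ).trace = (ρ * ρ).trace -
      (partialTraceRight ρ * partialTraceRight ρ).trace / Fintype.card n -
      (partialTraceLeft ρ * partialTraceLeft ρ).trace / Fintype.card m +
      ρ.trace ^ 2 / (Fintype.card m * Fintype.card n) := by
  have hm : (Fintype.card m : K) ≠ 0 := by simp
  have hn : (Fintype.card n : K) ≠ 0 := by simp
  simp only [correlationPart, mul_sub, mul_add, sub_mul, add_mul, smul_mul_assoc, mul_smul_comm,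
    mul_one, one_mul, ← mul_kronecker_mul, trace_add, trace_sub, trace_smul, trace_kronecker,
    trace_one, trace_mul_comm _ ρ, trace_mul_kronecker_one, trace_mul_one_kronecker,
    trace_partialTraceLeft, trace_partialTraceRight, smul_eq_mul, Fintype.card_prod,
    Nat.cast_mul]
  field_simp
  ring

lemma trace_correlationPart_mul_kronecker (ρ : Matrix (m × n) (m × n) K)
    {M : Matrix m m K} {N : Matrix n n K} (hM : M.trace = 0) (hN : N.trace = 0) :
    (correlationPart ρ * (M ⊗ₖ N)).trace = (ρ * (M ⊗ₖ N)).trace := by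
  simp [correlationPart, sub_mul, add_mul, ← mul_kronecker_mul, trace_kronecker, hM, hN]

end TracelessPart

section BlockPositive

variable {𝕜 m n : Type*} [RCLike 𝕜] [Fintype m] [Fintype n] {ρ : Matrix (m × n) (m × n) 𝕜}

/-- Block positivity of a bipartite Hermitian matrix: its expectation in every product vector
`v ⊗ w` is nonnegative. Density matrices, but also entanglement witnesses, have this property. -/
structure IsBlockPositive (ρ : Matrix (m × n) (m × n) 𝕜) : Prop where
  isHermitian : ρ.IsHermitian
  dotProduct_mulVec_nonneg (v : m → 𝕜) (w : n → 𝕜) :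
    0 ≤ star (fun p : m × n => v p.1 * w p.2) ⬝ᵥ ρ *ᵥ (fun p => v p.1 * w p.2)

lemma isBlockPositive_of_posSemidef (hρ : ρ.PosSemidef) : IsBlockPositive ρ :=
  ⟨hρ.isHermitian, fun _ _ => hρ.dotProduct_mulVec_nonneg _⟩

open scoped MatrixOrder in
lemma IsBlockPositive.trace_mul_kronecker_nonneg (hρ : IsBlockPositive ρ) {P : Matrix m m 𝕜}
    {Q : Matrix n n 𝕜} (hP : P.PosSemidef) (hQ : Q.PosSemidef) :
    0 ≤ (ρ * (P ⊗ₖ Q)).trace := by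
  classical
  obtain ⟨B, rfl⟩ := CStarAlgebra.nonneg_iff_eq_star_mul_self.mp hP.nonneg
  obtain ⟨C, rfl⟩ := CStarAlgebra.nonneg_iff_eq_star_mul_self.mp hQ.nonneg
  rw [mul_kronecker_mul, ← mul_assoc, trace_mul_comm, ← mul_assoc]
  refine Finset.sum_nonneg fun ⟨k, l⟩ _ => ?_
  convert hρ.dotProduct_mulVec_nonneg (star (B k)) (star (C l)) using 1
  simp [mul_apply, dotProduct, mulVec, mul_assoc, Finset.mul_sum]

lemma IsBlockPositive.posSemidef_partialTraceRight (hρ : IsBlockPositive ρ) :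
    (partialTraceRight ρ).PosSemidef := by
  classical
  refine .of_dotProduct_mulVec_nonneg (isHermitian_partialTraceRight hρ.isHermitian) fun v => ?_
  rw [dotProduct_comm, ← trace_vecMulVec, ← mul_vecMulVec, ← trace_mul_kronecker_one]
  exact hρ.trace_mul_kronecker_nonneg (posSemidef_vecMulVec_self_star v) .one

lemma IsBlockPositive.posSemidef_partialTraceLeft (hρ : IsBlockPositive ρ) :
    (partialTraceLeft ρ).PosSemidef := by
  classical
  refine .of_dotProduct_mulVec_nonneg (isHermitian_partialTraceLeft hρ.isHermitian) fun v => ?_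
  rw [dotProduct_comm, ← trace_vecMulVec, ← mul_vecMulVec, ← trace_mul_one_kronecker]
  exact hρ.trace_mul_kronecker_nonneg .one (posSemidef_vecMulVec_self_star v)

end BlockPositive

section LinEntropy

variable {n : Type*} [Fintype n] {ρ : Matrix n n ℂ}

/-- The linear entropy `(d - 1) / d` of the maximally mixed state on a `d`-dimensional space. -/
noncomputable def maxLinEntropy (n : Type*) [Fintype n] : ℝ :=
  ((Fintype.card n : ℝ) - 1) / Fintype.card n

/-- The Bloch radius of a state: the Hilbert–Schmidt norm of its traceless part, normalised to be
`0` for the maximally mixed state and `1` for pure states. -/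
noncomputable def blochRadius (ρ : Matrix n n ℂ) : ℝ :=
  √(1 - linEntropy ρ / maxLinEntropy n)

lemma inv_card_eq_one_sub_maxLinEntropy [Nonempty n] :
    (Fintype.card n : ℝ)⁻¹ = 1 - maxLinEntropy n := by
  rw [maxLinEntropy]
  field_simp
  ring

lemma maxLinEntropy_pos [Nontrivial n] : 0 < maxLinEntropy n :=
  div_pos (sub_pos.2 (by exact_mod_cast Fintype.one_lt_card)) (by exact_mod_cast Fintype.card_pos)

lemma linEntropy_eq_one_sub_sum_eigenvalues_sq [DecidableEq n] (hρ : ρ.IsHermitian) :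
    linEntropy ρ = 1 - ∑ i, hρ.eigenvalues i ^ 2 := by
  rw [linEntropy, trace_mul_self_eq_sum_eigenvalues_sq hρ]
  exact congrArg (1 - ·) (RCLike.ofReal_re (K := ℂ) _)

lemma trace_mul_self_eq_one_sub_linEntropy (hρ : ρ.IsHermitian) :
    (ρ * ρ).trace = ((1 - linEntropy ρ : ℝ) : ℂ) := by
  classical
  rw [linEntropy_eq_one_sub_sum_eigenvalues_sq hρ, sub_sub_cancel]
  exact trace_mul_self_eq_sum_eigenvalues_sq hρ

lemma linEntropy_nonneg (hρ : ρ.PosSemidef) (htr : ρ.trace = 1) : 0 ≤ linEntropy ρ := by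
  classical
  have hsum := sum_eigenvalues_eq_of_trace_eq hρ.isHermitian (r := 1) (by simpa using htr)
  rw [linEntropy_eq_one_sub_sum_eigenvalues_sq hρ.isHermitian, sub_nonneg]
  calc ∑ i, hρ.isHermitian.eigenvalues i ^ 2 ≤ (∑ i, hρ.isHermitian.eigenvalues i) ^ 2 :=
        Finset.sum_sq_le_sq_sum_of_nonneg fun i _ => hρ.eigenvalues_nonneg i
    _ = 1 := by rw [hsum, one_pow]

lemma trace_tracelessPart_mul_self_eq_sub_linEntropy [Nonempty n] [DecidableEq n]
    (hρ : ρ.IsHermitian) (htr : ρ.trace = 1) :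
    (tracelessPart ρ * tracelessPart ρ).trace = ((maxLinEntropy n - linEntropy ρ : ℝ) : ℂ) := by
  rw [trace_tracelessPart_mul_self, trace_mul_self_eq_one_sub_linEntropy hρ, htr, one_pow,
    one_div, ← Complex.ofReal_natCast, ← Complex.ofReal_inv, inv_card_eq_one_sub_maxLinEntropy]
  push_cast
  ring

lemma linEntropy_le_maxLinEntropy [Nonempty n] (hρ : ρ.IsHermitian) (htr : ρ.trace = 1) :
    linEntropy ρ ≤ maxLinEntropy n := by
  classical
  have hsq := re_trace_mul_self_nonneg (isHermitian_tracelessPart hρ)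
  rw [trace_tracelessPart_mul_self_eq_sub_linEntropy hρ htr] at hsq
  exact sub_nonneg.1 hsq

lemma blochRadius_nonneg (ρ : Matrix n n ℂ) : 0 ≤ blochRadius ρ :=
  Real.sqrt_nonneg _

lemma blochRadius_le_one [Nontrivial n] (hρ : ρ.PosSemidef) (htr : ρ.trace = 1) :
    blochRadius ρ ≤ 1 :=
  Real.sqrt_le_one.2 (sub_le_self 1 (div_nonneg (linEntropy_nonneg hρ htr) maxLinEntropy_pos.le))

lemma linEntropy_eq_maxLinEntropy_mul [Nontrivial n] (hρ : ρ.IsHermitian) (htr : ρ.trace = 1) :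
    linEntropy ρ = maxLinEntropy n * (1 - blochRadius ρ ^ 2) := by
  have hle := div_le_one_of_le₀ (linEntropy_le_maxLinEntropy hρ htr) maxLinEntropy_pos.le
  rw [blochRadius, Real.sq_sqrt (sub_nonneg.2 hle), sub_sub_cancel,
    mul_div_cancel₀ _ maxLinEntropy_pos.ne']

lemma trace_tracelessPart_mul_self_eq_blochRadius_sq [Nontrivial n] [DecidableEq n]
    (hρ : ρ.IsHermitian) (htr : ρ.trace = 1) :
    (tracelessPart ρ * tracelessPart ρ).trace =
      ((maxLinEntropy n * blochRadius ρ ^ 2 : ℝ) : ℂ) := by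
  rw [trace_tracelessPart_mul_self_eq_sub_linEntropy hρ htr, linEntropy_eq_maxLinEntropy_mul hρ htr]
  ring_nf

lemma posSemidef_smul_one_sub_tracelessPart [Nontrivial n] [DecidableEq n]
    (hρ : ρ.IsHermitian) (htr : ρ.trace = 1) :
    ((maxLinEntropy n * blochRadius ρ) • (1 : Matrix n n ℂ) - tracelessPart ρ).PosSemidef := by
  refine posSemidef_smul_one_sub_of_trace_eq_zero (isHermitian_tracelessPart hρ)
    (trace_tracelessPart ρ) (mul_nonneg maxLinEntropy_pos.le (blochRadius_nonneg ρ)) ?_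
  rw [trace_tracelessPart_mul_self_eq_blochRadius_sq hρ htr, inv_card_eq_one_sub_maxLinEntropy,
    RCLike.re_to_complex, Complex.ofReal_re]
  linarith

end LinEntropy

section Bipartite

variable {m n : Type*} [Fintype m] [Nontrivial m] [Fintype n] [Nontrivial n]

lemma one_le_blochRadius_add_blochRadius {σ : Matrix m m ℂ} {τ : Matrix n n ℂ}
    (hσ : σ.IsHermitian) (hσtr : σ.trace = 1) (hτ : τ.IsHermitian) (hτtr : τ.trace = 1)
    (h : linEntropy σ ≤ maxLinEntropy m *
      (linEntropy τ / maxLinEntropy n - 1 + 2 * blochRadius τ)) :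
    1 ≤ blochRadius σ + blochRadius τ := by
  rw [linEntropy_eq_maxLinEntropy_mul hσ hσtr, linEntropy_eq_maxLinEntropy_mul hτ hτtr,
    mul_div_cancel_left₀ _ maxLinEntropy_pos.ne'] at h
  have hle := le_of_mul_le_mul_left h maxLinEntropy_pos
  have hsq : (1 - blochRadius τ) ^ 2 ≤ blochRadius σ ^ 2 := by linarith
  linarith [le_of_sq_le_sq hsq (blochRadius_nonneg σ)]

variable {ρ : Matrix (m × n) (m × n) ℂ} [DecidableEq m] [DecidableEq n]

lemma linEntropy_eq_sub_re_trace_correlationPart (hρ : ρ.IsHermitian) (htr : ρ.trace = 1) :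
    linEntropy ρ = linEntropy (partialTraceRight ρ) + linEntropy (partialTraceLeft ρ) -
      maxLinEntropy m * maxLinEntropy n *
        (1 - blochRadius (partialTraceRight ρ) ^ 2 - blochRadius (partialTraceLeft ρ) ^ 2) -
      (correlationPart ρ * correlationPart ρ).trace.re := by
  have hRight := isHermitian_partialTraceRight hρ
  have hLeft := isHermitian_partialTraceLeft hρ
  have hpurity : (correlationPart ρ * correlationPart ρ).trace =
      ((1 - linEntropy ρ - (1 - linEntropy (partialTraceRight ρ)) * (Fintype.card n : ℝ)⁻¹ -
        (1 - linEntropy (partialTraceLeft ρ)) * (Fintype.card m : ℝ)⁻¹ +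
        (Fintype.card m : ℝ)⁻¹ * (Fintype.card n : ℝ)⁻¹ : ℝ) : ℂ) := by
    rw [trace_correlationPart_mul_self, trace_mul_self_eq_one_sub_linEntropy hρ,
      trace_mul_self_eq_one_sub_linEntropy hRight, trace_mul_self_eq_one_sub_linEntropy hLeft, htr]
    push_cast
    field_simp
  have hSRight := linEntropy_eq_maxLinEntropy_mul hRight (trace_partialTraceRight ρ ▸ htr)
  have hSLeft := linEntropy_eq_maxLinEntropy_mul hLeft (trace_partialTraceLeft ρ ▸ htr)
  rw [hpurity, Complex.ofReal_re, inv_card_eq_one_sub_maxLinEntropy,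
    inv_card_eq_one_sub_maxLinEntropy]
  linear_combination -maxLinEntropy n * hSRight - maxLinEntropy m * hSLeft

lemma IsBlockPositive.le_re_trace_mul_kronecker_tracelessPart (hρ : IsBlockPositive ρ)
    (htr : ρ.trace = 1) :
    maxLinEntropy m * maxLinEntropy n *
        (blochRadius (partialTraceRight ρ) * blochRadius (partialTraceLeft ρ)) *
        (blochRadius (partialTraceRight ρ) + blochRadius (partialTraceLeft ρ) - 1) ≤
      (ρ * (tracelessPart (partialTraceRight ρ) ⊗ₖ
        tracelessPart (partialTraceLeft ρ))).trace.re := by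
  have hRight := isHermitian_partialTraceRight hρ.isHermitian
  have hLeft := isHermitian_partialTraceLeft hρ.isHermitian
  have htrRight := trace_partialTraceRight ρ ▸ htr
  have htrLeft := trace_partialTraceLeft ρ ▸ htr
  have hpos := (Complex.le_def.1 <| hρ.trace_mul_kronecker_nonneg
    (posSemidef_smul_one_sub_tracelessPart hRight htrRight)
    (posSemidef_smul_one_sub_tracelessPart hLeft htrLeft)).1
  rw [trace_mul_smul_one_sub_kronecker_smul_one_sub, htr,
    trace_mul_tracelessPart, ← trace_tracelessPart_mul_self,
    trace_mul_tracelessPart, ← trace_tracelessPart_mul_self,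
    trace_tracelessPart_mul_self_eq_blochRadius_sq hRight htrRight,
    trace_tracelessPart_mul_self_eq_blochRadius_sq hLeft htrLeft] at hpos
  simp only [Complex.add_re, Complex.sub_re, Complex.smul_re, Complex.ofReal_re, Complex.one_re,
    Complex.zero_re, smul_eq_mul] at hpos
  linarith

lemma sq_re_trace_mul_kronecker_tracelessPart_le (hρ : ρ.IsHermitian) (htr : ρ.trace = 1) :
    (ρ * (tracelessPart (partialTraceRight ρ) ⊗ₖ
        tracelessPart (partialTraceLeft ρ))).trace.re ^ 2 ≤
      (correlationPart ρ * correlationPart ρ).trace.re *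
        (maxLinEntropy m * maxLinEntropy n *
          (blochRadius (partialTraceRight ρ) * blochRadius (partialTraceLeft ρ)) ^ 2) := by
  have hRight := isHermitian_partialTraceRight hρ
  have hLeft := isHermitian_partialTraceLeft hρ
  have hcauchy := sq_re_trace_mul_le (isHermitian_correlationPart hρ)
    (isHermitian_kronecker (isHermitian_tracelessPart hRight) (isHermitian_tracelessPart hLeft))
  rw [trace_correlationPart_mul_kronecker ρ (trace_tracelessPart _) (trace_tracelessPart _),
    ← mul_kronecker_mul, trace_kronecker,
    trace_tracelessPart_mul_self_eq_blochRadius_sq hRight (trace_partialTraceRight ρ ▸ htr),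
    trace_tracelessPart_mul_self_eq_blochRadius_sq hLeft (trace_partialTraceLeft ρ ▸ htr),
    ← Complex.ofReal_mul, RCLike.re_to_complex, RCLike.re_to_complex, RCLike.re_to_complex,
    Complex.ofReal_re] at hcauchy
  convert hcauchy using 2
  ring

lemma IsBlockPositive.mul_sq_le_re_trace_correlationPart_mul_self (hρ : IsBlockPositive ρ)
    (htr : ρ.trace = 1)
    (h : 1 ≤ blochRadius (partialTraceRight ρ) + blochRadius (partialTraceLeft ρ)) :
    maxLinEntropy m * maxLinEntropy n *
        (blochRadius (partialTraceRight ρ) + blochRadius (partialTraceLeft ρ) - 1) ^ 2 ≤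
      (correlationPart ρ * correlationPart ρ).trace.re := by
  have hxle := blochRadius_le_one hρ.posSemidef_partialTraceRight (trace_partialTraceRight ρ ▸ htr)
  have hyle := blochRadius_le_one hρ.posSemidef_partialTraceLeft (trace_partialTraceLeft ρ ▸ htr)
  have hlower := hρ.le_re_trace_mul_kronecker_tracelessPart htr
  have hupper := sq_re_trace_mul_kronecker_tracelessPart_le hρ.isHermitian htr
  set x := blochRadius (partialTraceRight ρ)
  set y := blochRadius (partialTraceLeft ρ)
  set z := (correlationPart ρ * correlationPart ρ).trace.re
  set D := maxLinEntropy m * maxLinEntropy n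
  have hD : 0 < D := mul_pos maxLinEntropy_pos maxLinEntropy_pos
  have hxy : x + y - 1 ≤ x * y := by linarith [mul_nonneg (sub_nonneg.2 hxle) (sub_nonneg.2 hyle)]
  obtain hdeg | hpos := (sub_nonneg.2 h).eq_or_lt
  · rw [← hdeg, zero_pow two_ne_zero, mul_zero]
    exact re_trace_mul_self_nonneg (isHermitian_correlationPart hρ.isHermitian)
  · have hxypos := hpos.trans_le hxy
    refine le_of_mul_le_mul_right ?_ (by positivity : 0 < D * (x * y) ^ 2)
    calc D * (x + y - 1) ^ 2 * (D * (x * y) ^ 2) = (D * (x * y) * (x + y - 1)) ^ 2 := by ring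
      _ ≤ (ρ * (tracelessPart (partialTraceRight ρ) ⊗ₖ
            tracelessPart (partialTraceLeft ρ))).trace.re ^ 2 :=
        pow_le_pow_left₀ (by positivity) hlower 2
      _ ≤ z * (D * (x * y) ^ 2) := hupper

end Bipartite

theorem dimensionally_sharp_subadditivity_general {m n : Type*} [Fintype m] [Nontrivial m]
    [Fintype n] [Nontrivial n] {ρ : Matrix (m × n) (m × n) ℂ} (hρ : IsBlockPositive ρ)
    (htr : ρ.trace = 1)
    (hcond : linEntropy (partialTraceRight ρ) ≤ maxLinEntropy m *
      (linEntropy (partialTraceLeft ρ) / maxLinEntropy n - 1 +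
        2 * blochRadius (partialTraceLeft ρ))) :
    linEntropy ρ ≤ linEntropy (partialTraceRight ρ) + linEntropy (partialTraceLeft ρ) -
      2 * maxLinEntropy m * maxLinEntropy n * (1 - blochRadius (partialTraceRight ρ)) *
        (1 - blochRadius (partialTraceLeft ρ)) := by
  classical
  have hradii := one_le_blochRadius_add_blochRadius
    (isHermitian_partialTraceRight hρ.isHermitian) (trace_partialTraceRight ρ ▸ htr)
    (isHermitian_partialTraceLeft hρ.isHermitian) (trace_partialTraceLeft ρ ▸ htr) hcond
  have hcorr := hρ.mul_sq_le_re_trace_correlationPart_mul_self htr hradii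
  rw [linEntropy_eq_sub_re_trace_correlationPart hρ.isHermitian htr]
  linarith

/-- **Dimensionally sharp subadditivity.** With `D_A = (d_A-1)/d_A`,
`D_B = (d_B-1)/d_B`, if `S_L(ρ_A) ≤ D_A (S_L(ρ_B)/D_B - 1 + 2√(1 - S_L(ρ_B)/D_B))`, then
`S_L(ρ_AB) ≤ S_L(ρ_A) + S_L(ρ_B) - 2 D_A D_B (1-√(1-S_L(ρ_A)/D_A))(1-√(1-S_L(ρ_B)/D_B))`. -/
theorem dimensionally_sharp_subadditivity (dA dB : ℕ) (hA : 2 ≤ dA) (hB : 2 ≤ dB)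
    (ρ : Matrix (Fin dA × Fin dB) (Fin dA × Fin dB) ℂ)
    (hρ : ρ.PosSemidef) (hρtr : ρ.trace = 1)
    (DA DB : ℝ) (hDA : DA = ((dA : ℝ) - 1) / dA) (hDB : DB = ((dB : ℝ) - 1) / dB)
    (hcond : linEntropy (ptraceB ρ) ≤
      DA * (linEntropy (ptraceA ρ) / DB - 1 + 2 * Real.sqrt (1 - linEntropy (ptraceA ρ) / DB))) :
    linEntropy ρ ≤ linEntropy (ptraceB ρ) + linEntropy (ptraceA ρ) -
      2 * DA * DB * (1 - Real.sqrt (1 - linEntropy (ptraceB ρ) / DA)) *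
        (1 - Real.sqrt (1 - linEntropy (ptraceA ρ) / DB)) := by
  obtain rfl : DA = maxLinEntropy (Fin dA) := by rw [hDA, maxLinEntropy, Fintype.card_fin]
  obtain rfl : DB = maxLinEntropy (Fin dB) := by rw [hDB, maxLinEntropy, Fintype.card_fin]
  have := Fin.nontrivial_iff_two_le.2 hA
  have := Fin.nontrivial_iff_two_le.2 hB
  exact dimensionally_sharp_subadditivity_general (isBlockPositive_of_posSemidef hρ) hρtr hcond
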